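/- Let U be a consistent c.e. theory and 𝒳 a set of sentences. Then U is strongly doubly 𝒳-generative if and only if U is effectively essentially hereditarily 𝒳-creative. -/

import Mathlib

open FirstOrder FirstOrder.Language

namespace PourEl

/-! ## Recursion-theoretic notions -/

/-- The `i`-th computably enumerable subset of `ℕ` (the domain of the `i`-th
partial computable function). -/
def WSet (i : ℕ) : Set ℕ :=
  {n | ((Denumerable.ofNat Nat.Partrec.Code i).eval n).Dom}

/-- A set of natural numbers is computably enumerable. -/
def CE (A : Set ℕ) : Prop := ∃ i, A = WSet i

/-- A set of natural numbers is computable. -/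
def Comp (A : Set ℕ) : Prop := ComputablePred (· ∈ A)

/-- Disjoint sets `X`, `Y` are computably separable iff some computable set
contains `X` and is disjoint from `Y`. -/
def CompSeparable (X Y : Set ℕ) : Prop :=
  ∃ Z : Set ℕ, Comp Z ∧ X ⊆ Z ∧ Y ∩ Z = ∅

/-- Computable inseparability. -/
def CompInseparable (X Y : Set ℕ) : Prop := ¬ CompSeparable X Y

/-- `Z` and `W` weakly biseparate `X` and `Y`. -/
def WeaklyBiseparate {α : Type*} (Z W X Y : Set α) : Prop :=
  X ⊆ Z ∧ Y ⊆ W ∧ Z ∩ Y = ∅ ∧ W ∩ X = ∅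

/-- `Z` and `W` biseparate `X` and `Y`. -/
def Biseparate {α : Type*} (Z W X Y : Set α) : Prop :=
  WeaklyBiseparate Z W X Y ∧ Z ∩ W = ∅

/-! ## Logical notions -/

variable {L : FirstOrder.Language}

/-- Provability: `φ` is a first-order consequence of `U` (by Gödel completeness,
semantic consequence). -/
def Prv (U : L.Theory) (φ : L.Sentence) : Prop := U ⊨ᵇ φ

/-- `U_p`: the set of theorems of `U`. -/
def Thms (U : L.Theory) : Set L.Sentence := {φ | Prv U φ}

/-- `U_r`: the set of refutable sentences of `U`. -/
def Refut (U : L.Theory) : Set L.Sentence := {φ | Prv U ∼φ}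

/-- Consistency: `U ⊬ ⊥`. -/
def Consistent (U : L.Theory) : Prop := ¬ Prv U ⊥

/-- `φ` is independent of `U`: `U` proves neither `φ` nor `¬φ`. -/
def Independent (U : L.Theory) (φ : L.Sentence) : Prop := ¬ Prv U φ ∧ ¬ Prv U ∼φ

/-- `U` is incomplete: some sentence is independent of it. -/
def Incomplete (U : L.Theory) : Prop := ∃ φ, Independent U φ

/-- Mono-consequence: `U ⊢_m φ` iff `ψ ⊢ φ` for some `ψ ∈ U`. -/
def MPrv (U : L.Theory) (φ : L.Sentence) : Prop := ∃ ψ ∈ U, Prv {ψ} φ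

/-- `U_m`: the set of mono-theorems of `U`. -/
def MThms (U : L.Theory) : Set L.Sentence := {φ | MPrv U φ}

/-- `U_n`: the set of mono-refutable sentences of `U`. -/
def MRefut (U : L.Theory) : Set L.Sentence := {φ | MPrv U ∼φ}

/-- Mono-consistency: every member is consistent by itself. -/
def MonoConsistent (U : L.Theory) : Prop := ∀ ψ ∈ U, Consistent ({ψ} : L.Theory)

/-- `Û`: the set of all non-empty finite conjunctions of elements of `U`. -/
def hat (U : L.Theory) : L.Theory :=
  {φ | ∃ (ψ : L.Sentence) (l : List L.Sentence),
    ψ ∈ U ∧ (∀ χ ∈ l, χ ∈ U) ∧ φ = l.foldl (· ⊓ ·) ψ}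

/-- `U ⋓ V`. -/
def Cup (U V : L.Theory) : L.Theory :=
  {χ | ∃ φ ∈ U, ∃ ψ ∈ V, χ = φ ⊓ ψ}

/-- `U ⋐ V`: for every `φ ∈ U` and `ψ ∈ V` there is `ρ ∈ V` with `ρ ⊢ φ ∧ ψ`. -/
def Ssub (U V : L.Theory) : Prop :=
  ∀ φ ∈ U, ∀ ψ ∈ V, ∃ ρ ∈ V, Prv {ρ} (φ ⊓ ψ)

/-! ## Gödel numbering -/

/-- A Gödel numbering of the sentences of a (countable) signature: a bijective
coding of sentences by natural numbers that is effective for the basic syntactic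
operations, and for which the theorems of a c.e. theory can be effectively
enumerated from an index of the theory. -/
structure Numbering (L : FirstOrder.Language) where
  equiv : L.Sentence ≃ ℕ
  neg_comp : Computable fun n => equiv ∼(equiv.symm n)
  inf_comp : Computable₂ fun m n => equiv (equiv.symm m ⊓ equiv.symm n)
  imp_comp : Computable₂ fun m n => equiv (equiv.symm m ⟹ equiv.symm n)
  iff_comp : Computable₂ fun m n => equiv (equiv.symm m ⇔ equiv.symm n)
  thmIdx : ℕ → ℕ
  thmIdx_comp : Computable thmIdx
  thmIdx_spec : ∀ i, WSet (thmIdx i) = equiv '' Thms (equiv.symm '' WSet i)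

namespace Numbering

variable (g : Numbering L)

/-- The code of a sentence. -/
def code (φ : L.Sentence) : ℕ := g.equiv φ

/-- The set of codes of a set of sentences. -/
def codes (S : Set L.Sentence) : Set ℕ := g.equiv '' S

/-- The theory axiomatised by the `i`-th c.e. set (identified with a set of
sentences via the numbering). -/
def thy (i : ℕ) : L.Theory := g.equiv.symm '' WSet i

/-- The theory `U` is computably enumerable (with respect to the numbering). -/
def CEThy (U : L.Theory) : Prop := CE (g.codes U)

end Numbering


/-- `U` is effectively essentially hereditarily `X`-creative. -/
def EffEssHerXCreative (g : Numbering L) (U : L.Theory) (X : Set L.Sentence) : Prop :=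
  ∃ Φ : ℕ × ℕ × ℕ →. ℕ, Partrec Φ ∧ ∀ i j k,
    Thms U ⊆ Thms (g.thy k) → Consistent (g.thy k) →
    Thms (g.thy i) ⊆ Thms (g.thy k) →
    g.codes (Thms (g.thy i)) ∩ WSet j = ∅ →
    ∃ n ∈ Φ (i, j, k), n ∈ g.codes X ∧ n ∉ g.codes (Thms (g.thy i)) ∪ WSet j

/-- `U` is strongly doubly `X`-generative. -/
def StrongDoublyXGenerative (g : Numbering L) (U : L.Theory) (X : Set L.Sentence) : Prop :=
  ∃ Φ : ℕ → ℕ → ℕ, Computable₂ Φ ∧ ∀ i j, WSet i ∩ WSet j = ∅ →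
    (Φ i j ∈ g.codes (Thms (∅ : L.Theory)) ↔ Φ i j ∈ WSet j) ∧
    (Φ i j ∈ g.codes (Refut U) ↔ Φ i j ∈ WSet i) ∧
    (Φ i j ∉ WSet i ∪ WSet j → Φ i j ∈ g.codes X)

/-!
A generative function, applied to an index of the theorems of `W_i` and to `j`, is a creativity
function: a value in `W_{i,p}` would be both provable and refutable in the consistent theory `W_k`,
and a value in `W_j` would be a theorem of pure logic, hence in `W_{i,p} ∩ W_j = ∅`.

Conversely, let `Φ` be a creativity function. By the recursion theorem there is a partial computable
`f` such that `f (i, j)` is the output of `Φ` on the theory `W_i ∩ {f (i, j)}`, the set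
`U_r ∪ (W_j ∩ {f (i, j)})` to be avoided, and the extension `U ∪ (W_i ∩ {f (i, j)})`. If
`f (i, j)` diverged, these would be the sets `∅`, `U_r` and `U`, on which `Φ` converges. If its
value `φ` lies in `W_i`, then `φ` is a theorem of the first set, so `Φ` was applied outside its
domain of correctness, which forces `U ∪ {φ}` to be inconsistent. In the same way `φ ∈ W_j` forces
`φ` to be provable in pure logic. Outside `W_i ∪ W_j` the three sets are again `∅`, `U_r` and `U`.
-/

section Computability

open Nat.Partrec (Code)

variable {α σ : Type*} [Primcodable α] [Primcodable σ]

theorem rePred_and {p q : α → Prop} (hp : REPred p) (hq : REPred q) :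
    REPred fun a => p a ∧ q a :=
  have hq' : Partrec₂ fun a (_ : Unit) => Part.assert (q a) fun _ => Part.some () :=
    Partrec.comp hq Computable.fst
  (Partrec.bind hp hq').dom_re.of_eq fun a => by simp [Part.assert]

theorem rePred_or {p q : α → Prop} (hp : REPred p) (hq : REPred q) :
    REPred fun a => p a ∨ q a := by
  obtain ⟨k, hk, hdom⟩ := Partrec.merge' hp hq
  exact hk.dom_re.of_eq fun a => (hdom a).2.trans <| by simp [Part.assert]

theorem rePred_mem {f : α →. σ} {g : α → σ} (hf : Partrec f) (hg : Computable g) :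
    REPred fun a => g a ∈ f a := by
  classical
  have heq : Partrec₂ fun a y => Part.assert (y = g a) fun _ => Part.some () :=
    ComputablePred.to_re ⟨inferInstance, (Primrec.eq (α := σ)).decide.to_comp.comp
      Computable.snd (hg.comp Computable.fst)⟩
  exact (hf.bind heq).dom_re.of_eq fun a => by simp [Part.assert, Part.bind, Part.mem_eq]

theorem rePred_mem_wSet {e m : α → ℕ} (he : Computable e) (hm : Computable m) :
    REPred fun a => m a ∈ WSet (e a) :=
  (Code.eval_part.comp ((Computable.ofNat Code).comp he) hm).dom_re

theorem exists_computable_wSet_eq {R : α → ℕ → Prop} (hR : REPred fun p : α × ℕ => R p.1 p.2) :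
    ∃ s : α → ℕ, Computable s ∧ ∀ a, WSet (s a) = {m | R a m} := by
  obtain ⟨c, hc⟩ := Code.exists_code.1 hR
  refine ⟨fun a => Encodable.encode (c.curry (Encodable.encode a)), ?_, fun a => ?_⟩
  · exact Computable.encode.comp
      (Code.primrec₂_curry.comp (Primrec.const c) Primrec.encode).to_comp
  · ext m
    simp [WSet, Code.eval_curry, hc, Part.assert]

theorem ce_of_rePred {A : Set ℕ} (hA : REPred (· ∈ A)) : CE A := by
  obtain ⟨s, -, hs⟩ := exists_computable_wSet_eq (α := Unit) (R := fun _ m => m ∈ A)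
    (Partrec.comp hA Computable.snd)
  exact ⟨s (), (hs ()).symm⟩

theorem ce_empty : CE ∅ :=
  ce_of_rePred <| (Partrec.none (σ := Unit)).dom_re.of_eq fun _ => by simp

theorem exists_computable_wSet_eq_union_inter_eval {A : Set ℕ} (hA : CE A) :
    ∃ s : Code × ℕ × ℕ → ℕ, Computable s ∧
      ∀ c x i, WSet (s (c, x, i)) = A ∪ WSet i ∩ {n | n ∈ c.eval x} := by
  obtain ⟨v, rfl⟩ := hA
  have hindex : Computable fun p : (Code × ℕ × ℕ) × ℕ => p.1.2.2 :=
    Computable.snd.comp (Computable.snd.comp Computable.fst)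
  have heval : Partrec fun p : (Code × ℕ × ℕ) × ℕ => p.1.1.eval p.1.2.1 :=
    Code.eval_part.comp (Computable.fst.comp Computable.fst)
      (Computable.fst.comp (Computable.snd.comp Computable.fst))
  obtain ⟨s, hs, wSet_s⟩ := exists_computable_wSet_eq
    (R := fun (p : Code × ℕ × ℕ) n => n ∈ WSet v ∨ n ∈ WSet p.2.2 ∧ n ∈ p.1.eval p.2.1)
    (rePred_or (rePred_mem_wSet (Computable.const v) Computable.snd)
      (rePred_and (rePred_mem_wSet hindex Computable.snd) (rePred_mem heval Computable.snd)))
  exact ⟨s, hs, fun c x i => wSet_s (c, x, i)⟩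

theorem exists_partrec_eq_comp_restricted_indices {Φ : ℕ × ℕ × ℕ →. ℕ} (hΦ : Partrec Φ)
    {Q R : Set ℕ} (hQ : CE Q) (hR : CE R) :
    ∃ f : ℕ × ℕ →. ℕ, Partrec f ∧ ∀ i j, ∃ a b k, f (i, j) = Φ (a, b, k) ∧
      WSet a = WSet i ∩ {n | n ∈ f (i, j)} ∧
      WSet b = Q ∪ WSet j ∩ {n | n ∈ f (i, j)} ∧
      WSet k = R ∪ WSet i ∩ {n | n ∈ f (i, j)} := by
  obtain ⟨a, ha, wSet_a⟩ := exists_computable_wSet_eq_union_inter_eval ce_empty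
  obtain ⟨b, hb, wSet_b⟩ := exists_computable_wSet_eq_union_inter_eval hQ
  obtain ⟨k, hk, wSet_k⟩ := exists_computable_wSet_eq_union_inter_eval hR
  have hleft : Computable fun p : Code × ℕ => (p.1, p.2, p.2.unpair.1) :=
    Computable.fst.pair (Computable.snd.pair
      (Computable.fst.comp (Computable.unpair.comp Computable.snd)))
  have hright : Computable fun p : Code × ℕ => (p.1, p.2, p.2.unpair.2) :=
    Computable.fst.pair (Computable.snd.pair
      (Computable.snd.comp (Computable.unpair.comp Computable.snd)))
  obtain ⟨c, hc⟩ := Code.fixed_point₂ (f := fun c x =>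
      Φ (a (c, x, x.unpair.1), b (c, x, x.unpair.2), k (c, x, x.unpair.1)))
    (hΦ.comp ((ha.comp hleft).pair ((hb.comp hright).pair (hk.comp hleft))))
  refine ⟨fun p => c.eval (Nat.pair p.1 p.2), ?_, fun i j => ?_⟩
  · exact Code.eval_part.comp (Computable.const c)
      (Primrec₂.natPair.to_comp.comp Computable.fst Computable.snd)
  · let x := Nat.pair i j
    refine ⟨a (c, x, i), b (c, x, j), k (c, x, i), ?_, ?_, wSet_b c x j, wSet_k c x i⟩
    · simpa only [x, Nat.unpair_pair] using congrFun hc x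
    · rw [wSet_a, Set.empty_union]

end Computability

section Provability

variable {S T : L.Theory} {φ : L.Sentence}

theorem thms_mono (h : S ⊆ T) : Thms S ⊆ Thms T := fun _ hφ =>
  Theory.models_of_models_theory (fun _ hψ => Theory.models_sentence_of_mem (h hψ)) hφ

theorem subset_thms (T : L.Theory) : T ⊆ Thms T := fun _ => Theory.models_sentence_of_mem

theorem refut_subset_of_thms_subset (h : Thms S ⊆ Thms T) : Refut S ⊆ Refut T := fun _ hφ => h hφ

theorem Consistent.disjoint_thms_refut (hT : Consistent T) : Disjoint (Thms T) (Refut T) := by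
  rw [Set.disjoint_left]
  intro φ hφ hnφ
  exact hT <| Theory.models_sentence_iff.2 fun M =>
    absurd (Theory.models_sentence_iff.1 hφ M)
      ((Sentence.realize_not _).1 (Theory.models_sentence_iff.1 hnφ M))

theorem Consistent.disjoint_thms_refut_of_union (h : Consistent (S ∪ T)) :
    Disjoint (Thms T) (Refut S) :=
  h.disjoint_thms_refut.mono (thms_mono Set.subset_union_right)
    (refut_subset_of_thms_subset (thms_mono Set.subset_union_left))

theorem consistent_union_singleton_of_notMem_refut (hφ : φ ∉ Refut T) :
    Consistent (T ∪ {φ}) := by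
  contrapose! hφ
  have hbot : Prv (T ∪ {φ}) ⊥ := not_not.1 hφ
  refine Theory.models_sentence_iff.2 fun M => (Sentence.realize_not _).2 fun hM => ?_
  have : M ⊨ T ∪ {φ} := by simpa [Theory.model_iff, hM] using M.is_model
  exact hbot.realize_sentence M

end Provability

section SelfCreative

/-- `P` stands for the set of values (at most one) of a computation whose output, whenever the
theory `I ∩ P` is consistent with `U` and proves nothing in `J ∩ P`, is a member of `X` outside
`(I ∩ P)_p`, `U_r` and `J ∩ P`. The sets `I ∩ P` and `J ∩ P` are the restrictions of `I` and `J` to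
the output itself, as obtained from the recursion theorem. -/
def SelfCreative (U : L.Theory) (X I J P : Set L.Sentence) : Prop :=
  Consistent (U ∪ I ∩ P) → Disjoint (Thms (I ∩ P)) (J ∩ P) →
    ∃ φ ∈ P, φ ∈ X ∧ φ ∉ Thms (I ∩ P) ∧ φ ∉ Refut U ∧ φ ∉ J ∩ P

namespace SelfCreative

variable {U : L.Theory} {X I J P : Set L.Sentence} {φ : L.Sentence}

theorem nonempty (h : SelfCreative U X I J P) (hU : Consistent U) : P.Nonempty := by
  by_contra hP
  obtain rfl : P = ∅ := Set.not_nonempty_iff_eq_empty.1 hP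
  obtain ⟨φ, hφ, -⟩ := h (by simpa using hU) (by simp)
  exact hφ

theorem mem_refut (h : SelfCreative U X I J {φ}) (hI : φ ∈ I) (hJ : φ ∉ J) : φ ∈ Refut U := by
  by_contra hφ
  have hIφ : I ∩ {φ} = {φ} := by simpa using hI
  have hJφ : J ∩ {φ} = ∅ := by simpa using hJ
  rw [SelfCreative, hIφ, hJφ] at h
  obtain ⟨ψ, rfl, -, hψ, -⟩ :=
    h (consistent_union_singleton_of_notMem_refut hφ) (Set.disjoint_empty _)
  exact hψ (subset_thms _ rfl)

theorem mem_thms_empty (h : SelfCreative U X I J {φ}) (hU : Consistent U) (hI : φ ∉ I)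
    (hJ : φ ∈ J) : φ ∈ Thms (∅ : L.Theory) := by
  by_contra hφ
  have hIφ : I ∩ {φ} = ∅ := by simpa using hI
  have hJφ : J ∩ {φ} = {φ} := by simpa using hJ
  rw [SelfCreative, hIφ, hJφ, Set.union_empty] at h
  obtain ⟨ψ, hψ, -, -, -, hne⟩ := h hU (Set.disjoint_singleton_right.2 hφ)
  exact hne hψ

theorem mem_and_notMem (h : SelfCreative U X I J {φ}) (hU : Consistent U) (hI : φ ∉ I)
    (hJ : φ ∉ J) : φ ∈ X ∧ φ ∉ Thms (∅ : L.Theory) ∧ φ ∉ Refut U := by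
  have hIφ : I ∩ {φ} = ∅ := by simpa using hI
  have hJφ : J ∩ {φ} = ∅ := by simpa using hJ
  rw [SelfCreative, hIφ, hJφ, Set.union_empty] at h
  obtain ⟨ψ, rfl, hX, hthm, href, -⟩ := h hU (Set.disjoint_empty _)
  exact ⟨hX, hthm, href⟩

theorem generative (h : SelfCreative U X I J {φ}) (hU : Consistent U) (hIJ : Disjoint I J) :
    (φ ∈ Thms (∅ : L.Theory) ↔ φ ∈ J) ∧ (φ ∈ Refut U ↔ φ ∈ I) ∧ (φ ∉ I ∪ J → φ ∈ X) := by
  have hexcl : φ ∈ Thms (∅ : L.Theory) → φ ∉ Refut U := fun hthm href =>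
    Set.disjoint_left.1 hU.disjoint_thms_refut (thms_mono (Set.empty_subset U) hthm) href
  have hIJφ : φ ∈ I → φ ∉ J := fun hI => Set.disjoint_left.1 hIJ hI
  have hrefut : φ ∈ I → φ ∈ Refut U := fun hI => h.mem_refut hI (hIJφ hI)
  have hthm : φ ∈ J → φ ∈ Thms (∅ : L.Theory) := fun hJ =>
    h.mem_thms_empty hU (fun hI => hIJφ hI hJ) hJ
  have houtside : φ ∉ I → φ ∉ J → φ ∈ X ∧ φ ∉ Thms (∅ : L.Theory) ∧ φ ∉ Refut U :=
    h.mem_and_notMem hU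
  rw [Set.mem_union]
  tauto

end SelfCreative

end SelfCreative

namespace Numbering

variable (g : Numbering L)

@[simp]
theorem mem_codes {S : Set L.Sentence} {n : ℕ} : n ∈ g.codes S ↔ g.equiv.symm n ∈ S :=
  Set.mem_image_equiv

@[simp]
theorem mem_thy {i : ℕ} {φ : L.Sentence} : φ ∈ g.thy i ↔ g.equiv φ ∈ WSet i :=
  Set.mem_image_equiv

theorem wSet_thmIdx (i : ℕ) : WSet (g.thmIdx i) = g.codes (Thms (g.thy i)) := g.thmIdx_spec i

theorem ce_codes_refut {U : L.Theory} (hU : g.CEThy U) : CE (g.codes (Refut U)) := by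
  obtain ⟨u, hu⟩ := hU
  have hthy : g.thy u = U := by
    ext φ
    rw [mem_thy, ← hu, mem_codes, Equiv.symm_apply_apply]
  refine ce_of_rePred <|
    (rePred_mem_wSet (Computable.const (g.thmIdx u)) g.neg_comp).of_eq fun n => ?_
  rw [wSet_thmIdx, hthy, mem_codes, mem_codes, Equiv.symm_apply_apply]
  rfl

end Numbering

section Equivalence

variable {g : Numbering L} {U : L.Theory} {X : Set L.Sentence}

theorem StrongDoublyXGenerative.effEssHerXCreative (h : StrongDoublyXGenerative g U X) :
    EffEssHerXCreative g U X := by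
  obtain ⟨Φ, hΦ, hgen⟩ := h
  refine ⟨fun p => Part.some (Φ (g.thmIdx p.1) p.2.1), ?_, fun i j k hUk hk hik hij => ?_⟩
  · exact (hΦ.comp (g.thmIdx_comp.comp Computable.fst)
      (Computable.fst.comp Computable.snd)).partrec
  · obtain ⟨hthm, href, hX⟩ := hgen (g.thmIdx i) j (by rwa [g.wSet_thmIdx])
    rw [g.wSet_thmIdx] at href hX
    set n := Φ (g.thmIdx i) j
    have hn_thms : n ∉ g.codes (Thms (g.thy i)) := fun hn =>
      Set.disjoint_left.1 hk.disjoint_thms_refut (hik (g.mem_codes.1 hn))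
        (refut_subset_of_thms_subset hUk (g.mem_codes.1 (href.2 hn)))
    have hn_wSet : n ∉ WSet j := fun hn =>
      hn_thms (g.mem_codes.2 (thms_mono (Set.empty_subset _) (g.mem_codes.1 (hthm.2 hn))))
    have hn : n ∉ g.codes (Thms (g.thy i)) ∪ WSet j := not_or.2 ⟨hn_thms, hn_wSet⟩
    exact ⟨n, Part.mem_some n, hX hn, hn⟩

theorem EffEssHerXCreative.exists_partrec_selfCreative (hU : g.CEThy U)
    (h : EffEssHerXCreative g U X) :
    ∃ f : ℕ × ℕ →. ℕ, Partrec f ∧ ∀ i j,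
      SelfCreative U X (g.thy i) (g.thy j) {φ | g.equiv φ ∈ f (i, j)} := by
  obtain ⟨Φ, hΦ, hcreative⟩ := h
  obtain ⟨f, hf, hfΦ⟩ := exists_partrec_eq_comp_restricted_indices hΦ (g.ce_codes_refut hU) hU
  refine ⟨f, hf, fun i j hcon hdisj => ?_⟩
  obtain ⟨a, b, k, hval, wSet_a, wSet_b, wSet_k⟩ := hfΦ i j
  set P : Set L.Sentence := {φ | g.equiv φ ∈ f (i, j)}
  have thy_a : g.thy a = g.thy i ∩ P := by ext φ; simp [wSet_a, P]
  have thy_k : g.thy k = U ∪ g.thy i ∩ P := by ext φ; simp [wSet_k, P]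
  have wSet_b' : WSet b = g.codes (Refut U ∪ g.thy j ∩ P) := by ext n; simp [wSet_b, P]
  have hdisj' : g.codes (Thms (g.thy a)) ∩ WSet b = ∅ := by
    rw [thy_a, wSet_b', ← Set.disjoint_iff_inter_eq_empty]
    exact (Set.disjoint_image_iff g.equiv.injective).2
      (Set.disjoint_union_right.2 ⟨hcon.disjoint_thms_refut_of_union, hdisj⟩)
  obtain ⟨n, hn, hX, hout⟩ := hcreative a b k
    (by rw [thy_k]; exact thms_mono Set.subset_union_left) (by rwa [thy_k])
    (by rw [thy_a, thy_k]; exact thms_mono Set.subset_union_right) hdisj'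
  rw [thy_a, wSet_b', Set.mem_union, g.mem_codes, g.mem_codes, Set.mem_union, not_or, not_or]
    at hout
  exact ⟨g.equiv.symm n, by simpa [P, hval] using hn, g.mem_codes.1 hX, hout⟩

theorem EffEssHerXCreative.strongDoublyXGenerative (hU : g.CEThy U) (hcon : Consistent U)
    (h : EffEssHerXCreative g U X) : StrongDoublyXGenerative g U X := by
  obtain ⟨f, hf, hself⟩ := h.exists_partrec_selfCreative hU
  have hexists : ∀ i j, ∃ n, n ∈ f (i, j) := fun i j =>
    have ⟨φ, hφ⟩ := (hself i j).nonempty hcon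
    ⟨g.equiv φ, hφ⟩
  choose F hF using hexists
  refine ⟨F, hf.of_eq fun p => Part.eq_some_iff.2 (hF p.1 p.2), fun i j hij => ?_⟩
  have houtput : {φ | g.equiv φ ∈ f (i, j)} = {g.equiv.symm (F i j)} := by
    ext φ
    simp [Part.eq_some_iff.2 (hF i j), Equiv.eq_symm_apply]
  have hdisj : Disjoint (g.thy i) (g.thy j) :=
    (Set.disjoint_image_iff g.equiv.symm.injective).2 (Set.disjoint_iff_inter_eq_empty.2 hij)
  have hgen := SelfCreative.generative (houtput ▸ hself i j) hcon hdisj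
  simpa only [Numbering.mem_codes, Numbering.mem_thy, Set.mem_union, Equiv.apply_symm_apply]
    using hgen

end Equivalence

/-- A consistent c.e. theory `U` is strongly doubly
`X`-generative iff it is effectively essentially hereditarily `X`-creative. -/
theorem statement17 {L : FirstOrder.Language} (g : Numbering L) (U : L.Theory)
    (hU : g.CEThy U) (hcon : Consistent U) (X : Set L.Sentence) :
    StrongDoublyXGenerative g U X ↔ EffEssHerXCreative g U X :=
  ⟨StrongDoublyXGenerative.effEssHerXCreative,
    EffEssHerXCreative.strongDoublyXGenerative hU hcon⟩

end PourEl
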